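/- Let C = n₁Γ₁ + n₂Γ₂ be a numerically 4-connected even curve on a smooth algebraic surface with exactly two irreducible components, where Γ₁·Γ₂ = 1, Γ₁² = 0 ≥ Γ₂², and n₂ is even. Set a₁ = ⌈n₁/2⌉, a₂ = n₂/2, G = a₁Γ₁ + a₂Γ₂ and E = C − G. If Γ₂² < 0, then E is numerically 1-connected and G is numerically 2-connected. -/

import Mathlib

/-!
On `x Γ₁ + y Γ₂` the pairing is determined by `Γ₁² = 0`, `Γ₁·Γ₂ = 1` and `Γ₂² = -e` with
`e > 0`, so the theorem reduces to an inequality between integers. The 4-connectedness of `C`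
is needed only for the decompositions splitting off one copy of `Γ₁` or of `Γ₂`: these give
`n₂ ≥ 4` and `n₁ ≥ e (n₂ - 1) + 4`. Hence, with `m = n₂ / 2 ≥ 2`, any `f` with
`2 f + 1 ≥ n₁` satisfies `f ≥ e (m - 1) + 2`, because `e ≥ 1`. The intersection number of the
two parts of a decomposition of `f Γ₁ + m Γ₂` is affine in the multiplicity `x` of `Γ₁` in the
first part. If both parts contain `Γ₂`, the bounds on `m` and `f` make it at least `2` at
`x = 0` and `x = f`, hence in between; otherwise it is a positive multiple of `m`
(`two_le_pairing`).
Both `⌊n₁/2⌋` and `⌈n₁/2⌉` are admissible values of `f`, so `E` and `G` are both numerically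
2-connected.
-/

/-! Abstract framework: curves (possibly reducible, non-reduced) lying on a smooth
algebraic surface, following Franciosi, "On the canonical ring of curves and surfaces". -/

/-- Effective divisors on the surface, as formal `ℕ`-combinations of the irreducible
curves on the surface (indexed by `ι`). -/
abbrev EffDiv (ι : Type) := ι →₀ ℕ

/-- `ℤ`-divisors on the surface. -/
abbrev ZDiv (ι : Type) := ι →₀ ℤ

/-- An effective divisor viewed as a `ℤ`-divisor. -/
noncomputable def zdiv {ι : Type} (D : EffDiv ι) : ZDiv ι :=
  Finsupp.mapRange (Nat.cast : ℕ → ℤ) Nat.cast_zero D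

/-- An abstract theory of curves lying on a smooth algebraic surface over the field `𝕜`:
it records the intersection pairing of divisors, arithmetic genus, Picard groups of
invertible sheaves (written additively, so that `F + G` is `F ⊗ G` and `n • F` is
`F^{⊗n}`), dualizing sheaves `omega`, restrictions to subcurves, multidegrees, rings of
sections with their multiplication and restriction maps, the dimensions `h⁰, h¹` of the
cohomology of invertible sheaves, and the geometric predicates (base point freeness,
very ampleness, honest hyperellipticity) used in the paper. -/
structure SurfaceCurveTheory (𝕜 : Type) [Field 𝕜] where
  /-- index type for the irreducible curves on the surface -/
  ι : Type
  /-- the intersection pairing of divisors on the smooth surface -/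
  inter : ZDiv ι → ZDiv ι → ℤ
  inter_symm : ∀ A B, inter A B = inter B A
  inter_add_left : ∀ A B C, inter (A + B) C = inter A C + inter B C
  /-- the arithmetic genus `p_a(D) = 1 - χ(O_D)` of an effective divisor -/
  pa : EffDiv ι → ℤ
  /-- the Picard group of invertible sheaves on `D`, written additively -/
  Pic : EffDiv ι → Type
  [picAddCommGroup : ∀ D, AddCommGroup (Pic D)]
  /-- the dualizing sheaf `ω_D` -/
  omega : (D : EffDiv ι) → Pic D
  /-- the invertible sheaf `O_D(E)`, for `E` a divisor on the surface -/
  OD : (D : EffDiv ι) → ZDiv ι → Pic D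
  /-- restriction of invertible sheaves to subcurves -/
  res : {D B : EffDiv ι} → B ≤ D → Pic D → Pic B
  /-- `deg F B` is the degree of `F|_B` on a subcurve `B` -/
  deg : {D : EffDiv ι} → Pic D → EffDiv ι → ℤ
  /-- an ambient ring of sections over the curve `D` (containing all the spaces
  `H⁰(D, F)`, with its ring structure given by multiplication of sections) -/
  SecRing : EffDiv ι → Type
  [secCommRing : ∀ D, CommRing (SecRing D)]
  [secAlgebra : ∀ D, Algebra 𝕜 (SecRing D)]
  /-- the space of global sections `H⁰(D, F)` of an invertible sheaf -/
  H0 : {D : EffDiv ι} → Pic D → Submodule 𝕜 (SecRing D)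
  /-- multiplication of sections: `H⁰(F) ⊗ H⁰(G) → H⁰(F ⊗ G)` -/
  mul_mem : ∀ {D : EffDiv ι} {F G : Pic D} {x y : SecRing D},
      x ∈ H0 F → y ∈ H0 G → x * y ∈ H0 (F + G)
  /-- restriction of sections to a subcurve -/
  resSec : {D B : EffDiv ι} → B ≤ D → SecRing D →ₐ[𝕜] SecRing B
  resSec_mem : ∀ {D B : EffDiv ι} (h : B ≤ D) (F : Pic D) (x : SecRing D),
      x ∈ H0 F → resSec h x ∈ H0 (res h F)
  /-- `h⁰(D, F)` -/
  h0 : {D : EffDiv ι} → Pic D → ℕ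
  /-- `h¹(D, F)` -/
  h1 : {D : EffDiv ι} → Pic D → ℕ
  h0_eq : ∀ {D : EffDiv ι} (F : Pic D), h0 F = Module.finrank 𝕜 (H0 F)
  /-- `IsBPF F W`: the linear system on `D` given by the subspace `W ⊆ H⁰(D, F)`
  is base point free -/
  IsBPF : {D : EffDiv ι} → (F : Pic D) → Submodule 𝕜 (SecRing D) → Prop
  /-- `F` is very ample on `D` -/
  VeryAmple : {D : EffDiv ι} → Pic D → Prop
  /-- `D` is honestly hyperelliptic (a finite double cover of `ℙ¹`) -/
  HonestlyHyperelliptic : EffDiv ι → Prop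
  /-- `GenPic B d P`: the property `P` holds for a general invertible sheaf of
  multidegree `d` on `B`, i.e. on the complement of a proper closed subscheme
  of the Picard scheme `Pic^d(B)` -/
  GenPic : (B : EffDiv ι) → (d : ι → ℤ) → (Pic B → Prop) → Prop

attribute [instance] SurfaceCurveTheory.picAddCommGroup
attribute [instance] SurfaceCurveTheory.secCommRing
attribute [instance] SurfaceCurveTheory.secAlgebra

namespace SurfaceCurveTheory

noncomputable section

variable {𝕜 : Type} [Field 𝕜] (T : SurfaceCurveTheory 𝕜)

/-- `B` is a subcurve of `C` (a nonzero effective divisor with `B ≤ C`). -/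
def Subcurve (B C : EffDiv T.ι) : Prop := B ≠ 0 ∧ B ≤ C

/-- `C` is numerically `m`-connected: `C₁ · C₂ ≥ m` for every effective
decomposition `C = C₁ + C₂`. -/
def Connected (C : EffDiv T.ι) (m : ℤ) : Prop :=
  ∀ A B : EffDiv T.ι, A ≠ 0 → B ≠ 0 → A + B = C → m ≤ T.inter (zdiv A) (zdiv B)

/-- the degree of `F` on the irreducible component `Γ_i`. -/
def degc {D : EffDiv T.ι} (F : T.Pic D) (i : T.ι) : ℤ := T.deg F (Finsupp.single i 1)

/-- `C` is an even curve: `deg (ω_C|_{Γ_i})` is even on every component of `C`. -/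
def EvenCurve (C : EffDiv T.ι) : Prop :=
  ∀ i ∈ C.support, Even (T.degc (T.omega C) i)

/-- `F` is an even invertible sheaf on `C`. -/
def EvenSheaf {C : EffDiv T.ι} (F : T.Pic C) : Prop :=
  ∀ i ∈ C.support, Even (T.degc F i)

/-- numerical equivalence of invertible sheaves: equal multidegrees. -/
def NumEq {D : EffDiv T.ι} (F G : T.Pic D) : Prop := ∀ i : T.ι, T.degc F i = T.degc G i

/-- `F` is NEF on the subcurve `B`: nonnegative degree on every component of `B`. -/
def NefOn {D : EffDiv T.ι} (F : T.Pic D) (B : EffDiv T.ι) : Prop :=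
  ∀ i ∈ B.support, 0 ≤ T.degc F i

/-- Surjectivity of the multiplication map `H⁰(D, F) ⊗ H⁰(D, G) → H⁰(D, F ⊗ G)`:
every section of `F ⊗ G` lies in the span of products of sections. -/
def MulSurj {D : EffDiv T.ι} (F G : T.Pic D) : Prop :=
  T.H0 (F + G) ≤ T.H0 F * T.H0 G

/-- Surjectivity of the restriction map `H⁰(D, F) → H⁰(B, F|_B)`. -/
def ResSurj {D B : EffDiv T.ι} (h : B ≤ D) (F : T.Pic D) : Prop :=
  T.H0 (T.res h F) ≤ (T.H0 F).map (T.resSec h).toLinearMap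

end

end SurfaceCurveTheory

open SurfaceCurveTheory

/-- The arithmetic core: `x (m - y) + y (f - x) - e y (m - y)` is the intersection number of
`x Γ₁ + y Γ₂` and its complement in `f Γ₁ + m Γ₂`. -/
theorem two_le_pairing (e f m x y : ℤ) (he : 1 ≤ e) (hm : 2 ≤ m) (hf : e * (m - 1) + 2 ≤ f)
    (hx : 0 ≤ x) (hxf : x ≤ f) (hy : 0 ≤ y) (hym : y ≤ m)
    (h0 : ¬ (x = 0 ∧ y = 0)) (h1 : ¬ (x = f ∧ y = m)) :
    2 ≤ x * (m - y) + y * (f - x) - e * (y * (m - y)) := by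
  rcases hy.eq_or_lt with rfl | hy'
  · have : 1 ≤ x := by omega
    nlinarith
  rcases hym.eq_or_lt with rfl | hym'
  · have : 1 ≤ f - x := by omega
    nlinarith
  have hA : 2 ≤ f - e * (m - y) := by nlinarith
  have hB : 2 ≤ f - e * y := by nlinarith
  -- The slope in `x` is `m - 2 y`; its sign decides which end of `[0, f]` gives the minimum.
  rcases le_total (2 * y) m with h | h
  · have h2 : 0 ≤ x * (m - 2 * y) := mul_nonneg hx (by omega)
    have h3 : 2 ≤ y * (f - e * (m - y)) := by nlinarith
    linarith
  · have h2 : 0 ≤ (f - x) * (2 * y - m) := mul_nonneg (by omega) (by omega)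
    have h3 : 2 ≤ (m - y) * (f - e * y) := by nlinarith
    linarith

theorem zdiv_comb {ι : Type} (Γ₁ Γ₂ : EffDiv ι) (a b : ℕ) :
    zdiv (a • Γ₁ + b • Γ₂) = a • zdiv Γ₁ + b • zdiv Γ₂ := by
  ext i
  simp [zdiv]

theorem inter_nsmul_left {𝕜 : Type} [Field 𝕜] (T : SurfaceCurveTheory 𝕜) (n : ℕ)
    (A B : ZDiv T.ι) : T.inter (n • A) B = n * T.inter A B := by
  induction n with
  | zero =>
    have h := T.inter_add_left 0 0 B
    simp only [add_zero] at h
    simp only [zero_smul, Nat.cast_zero, zero_mul]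
    linarith
  | succ k ih =>
    rw [succ_nsmul, T.inter_add_left, ih]
    push_cast
    ring

theorem inter_comb {𝕜 : Type} [Field 𝕜] (T : SurfaceCurveTheory 𝕜) (Γ₁ Γ₂ : EffDiv T.ι)
    (h12 : T.inter (zdiv Γ₁) (zdiv Γ₂) = 1) (h11 : T.inter (zdiv Γ₁) (zdiv Γ₁) = 0)
    (a b c d : ℕ) :
    T.inter (zdiv (a • Γ₁ + b • Γ₂)) (zdiv (c • Γ₁ + d • Γ₂)) =
      a * d + b * c + b * d * T.inter (zdiv Γ₂) (zdiv Γ₂) := by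
  have key : ∀ B, T.inter (zdiv (a • Γ₁ + b • Γ₂)) B =
      a * T.inter (zdiv Γ₁) B + b * T.inter (zdiv Γ₂) B := by
    intro B
    rw [zdiv_comb, T.inter_add_left, inter_nsmul_left, inter_nsmul_left]
  have key' : ∀ B, T.inter B (zdiv (c • Γ₁ + d • Γ₂)) =
      c * T.inter (zdiv Γ₁) B + d * T.inter (zdiv Γ₂) B := by
    intro B
    rw [T.inter_symm, zdiv_comb, T.inter_add_left, inter_nsmul_left, inter_nsmul_left]
  have h21 := T.inter_symm (zdiv Γ₂) (zdiv Γ₁)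
  rw [key, key', key', h21, h12, h11]
  ring

/-- The numerical bounds on `f` and `m` suffice for `f Γ₁ + m Γ₂` to be 2-connected. -/
theorem connected_two_of_bounds {𝕜 : Type} [Field 𝕜] (T : SurfaceCurveTheory 𝕜)
    (i₁ i₂ : T.ι) (hne : i₁ ≠ i₂)
    (h12 : T.inter (zdiv (Finsupp.single i₁ 1)) (zdiv (Finsupp.single i₂ 1)) = 1)
    (h11 : T.inter (zdiv (Finsupp.single i₁ 1)) (zdiv (Finsupp.single i₁ 1)) = 0)
    (h22 : T.inter (zdiv (Finsupp.single i₂ 1)) (zdiv (Finsupp.single i₂ 1)) < 0)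
    (f m : ℕ) (hm : 2 ≤ m)
    (hf : -T.inter (zdiv (Finsupp.single i₂ 1)) (zdiv (Finsupp.single i₂ 1)) * ((m : ℤ) - 1) + 2
      ≤ f) :
    T.Connected (f • Finsupp.single i₁ 1 + m • Finsupp.single i₂ 1) 2 := by
  intro A B hA hB hAB
  have e1 : A i₁ + B i₁ = f := by
    simpa [hne, hne.symm] using DFunLike.congr_fun hAB i₁
  have e2 : A i₂ + B i₂ = m := by
    simpa [hne, hne.symm] using DFunLike.congr_fun hAB i₂
  have e3 : ∀ j, j ≠ i₁ → j ≠ i₂ → A j = 0 ∧ B j = 0 := by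
    intro j h1 h2
    simpa [h1, h2, Ne.symm h1, Ne.symm h2] using DFunLike.congr_fun hAB j
  -- The parts of the decomposition are themselves supported on the two components.
  have dec : ∀ D : EffDiv T.ι, (∀ j, j ≠ i₁ → j ≠ i₂ → D j = 0) →
      D = D i₁ • Finsupp.single i₁ 1 + D i₂ • Finsupp.single i₂ 1 := by
    intro D hD
    ext j
    by_cases h1 : j = i₁
    · subst h1; simp [hne]
    by_cases h2 : j = i₂
    · subst h2; simp [hne.symm]
    simp [hD j h1 h2, h1, h2]
  have dA := dec A fun j h1 h2 => (e3 j h1 h2).1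
  have dB := dec B fun j h1 h2 => (e3 j h1 h2).2
  have nA : ¬ (A i₁ = 0 ∧ A i₂ = 0) := by
    rintro ⟨h1, h2⟩
    exact hA (by rw [dA, h1, h2]; simp)
  have nB : ¬ (B i₁ = 0 ∧ B i₂ = 0) := by
    rintro ⟨h1, h2⟩
    exact hB (by rw [dB, h1, h2]; simp)
  rw [dA, dB, inter_comb T _ _ h12 h11]
  have := two_le_pairing (-T.inter (zdiv (Finsupp.single i₂ 1)) (zdiv (Finsupp.single i₂ 1)))
    f m (A i₁) (A i₂) (by omega) (by omega) hf (by omega) (by omega) (by omega) (by omega)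
    (by omega) (by omega)
  have c1 : (B i₁ : ℤ) = f - A i₁ := by omega
  have c2 : (B i₂ : ℤ) = m - A i₂ := by omega
  rw [c1, c2]
  linarith

/-- **(from the proof of Theorem 1, Case C.4.3, Franciosi).** Let `C = n₁Γ₁ + n₂Γ₂` be a
numerically 4-connected even curve on a smooth algebraic surface with exactly two
irreducible components, where `Γ₁·Γ₂ = 1`, `Γ₁² = 0 ≥ Γ₂²` and `n₂` is even. Set
`a₁ = ⌈n₁/2⌉`, `a₂ = n₂/2`, `G = a₁Γ₁ + a₂Γ₂` and `E = C − G`. If `Γ₂² < 0`, then `E`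
is numerically 1-connected and `G` is numerically 2-connected. -/
theorem two_component_decomposition_connected
    {𝕜 : Type} [Field 𝕜] [IsAlgClosed 𝕜] (T : SurfaceCurveTheory 𝕜)
    (i₁ i₂ : T.ι) (hne : i₁ ≠ i₂)
    (Γ₁ Γ₂ : EffDiv T.ι) (hΓ₁ : Γ₁ = Finsupp.single i₁ 1) (hΓ₂ : Γ₂ = Finsupp.single i₂ 1)
    (n₁ n₂ : ℕ) (hn₁ : 1 ≤ n₁) (hn₂ : 1 ≤ n₂)
    (C : EffDiv T.ι) (hCdef : C = n₁ • Γ₁ + n₂ • Γ₂)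
    (h4conn : T.Connected C 4)
    (heven : T.EvenCurve C)
    (hn₂even : Even n₂)
    (h12 : T.inter (zdiv Γ₁) (zdiv Γ₂) = 1)
    (h11 : T.inter (zdiv Γ₁) (zdiv Γ₁) = 0)
    (h22 : T.inter (zdiv Γ₂) (zdiv Γ₂) < 0) :
    T.Connected ((n₁ - (n₁ + 1) / 2) • Γ₁ + (n₂ / 2) • Γ₂) 1 ∧
    T.Connected (((n₁ + 1) / 2) • Γ₁ + (n₂ / 2) • Γ₂) 2 := by
  subst hΓ₁ hΓ₂ hCdef
  obtain ⟨m, rfl⟩ := hn₂even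
  have hm2 : (m + m) / 2 = m := by omega
  rw [hm2]
  have s1 : (Finsupp.single i₁ 1 : EffDiv T.ι) ≠ 0 := by simp
  have s2 : (Finsupp.single i₂ 1 : EffDiv T.ι) ≠ 0 := by simp
  have comp1 : ∀ a b : ℕ, 0 < b →
      a • Finsupp.single i₁ 1 + b • Finsupp.single i₂ 1 ≠ (0 : EffDiv T.ι) := by
    intro a b hb h
    have := DFunLike.congr_fun h i₂
    simp [hne] at this
    omega
  have comp2 : ∀ a b : ℕ, 0 < a →
      a • Finsupp.single i₁ 1 + b • Finsupp.single i₂ 1 ≠ (0 : EffDiv T.ι) := by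
    intro a b hb h
    have := DFunLike.congr_fun h i₁
    simp [hne.symm] at this
    omega
  -- `Γ₁ · (C - Γ₁) ≥ 4` and `Γ₂ · (C - Γ₂) ≥ 4`.
  have q1 := h4conn (1 • Finsupp.single i₁ 1 + 0 • Finsupp.single i₂ 1)
    ((n₁ - 1) • Finsupp.single i₁ 1 + (m + m) • Finsupp.single i₂ 1)
    (comp2 _ _ one_pos) (comp1 _ _ (by omega))
    (by rw [add_add_add_comm, ← add_smul, ← add_smul, zero_add,
          show 1 + (n₁ - 1) = n₁ by omega])
  have q2 := h4conn (0 • Finsupp.single i₁ 1 + 1 • Finsupp.single i₂ 1)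
    (n₁ • Finsupp.single i₁ 1 + (m + m - 1) • Finsupp.single i₂ 1)
    (comp1 _ _ one_pos) (comp2 _ _ (by omega))
    (by rw [add_add_add_comm, ← add_smul, ← add_smul, zero_add,
          show 1 + (m + m - 1) = m + m by omega])
  rw [inter_comb T _ _ h12 h11] at q1 q2
  push_cast [Nat.cast_sub (show 1 ≤ m + m by omega)] at q1 q2
  have hm : 2 ≤ m := by omega
  have main : ∀ f : ℕ, n₁ ≤ 2 * f + 1 →
      T.Connected (f • Finsupp.single i₁ 1 + m • Finsupp.single i₂ 1) 2 := by
    intro f hf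
    refine connected_two_of_bounds T i₁ i₂ hne h12 h11 h22 f m hm ?_
    have hf' : (n₁ : ℤ) ≤ 2 * f + 1 := by exact_mod_cast hf
    nlinarith
  refine ⟨fun A B hA hB hAB => ?_, main _ (by omega)⟩
  exact le_trans (by norm_num) (main _ (by omega) A B hA hB hAB)
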